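/- Assume (A1) and (A2). Let Y(t) be a solution of the gradient flow of the relative entropy, and suppose t_i → ∞ is a sequence of times with diam Y(t_i) → ∞. Then there exist a subsequence (t_{i_k}) and points y_1^∞, …, y_n^∞ in ℝ^s which are pairwise distinct, such that Y(t_{i_k}) / diam Y(t_{i_k}) converges to (y_1^∞, …, y_n^∞) as k → ∞. -/

import Mathlib

open Filter Topology

/-- The normalizing constant `Z = Σ_{k ≠ ℓ} β(|y_k - y_ℓ|²)`. -/
noncomputable def pairZ {E : Type*} [NormedAddCommGroup E] (β : ℝ → ℝ) {n : ℕ}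
    (Y : Fin n → E) : ℝ :=
  ∑ k : Fin n, ∑ l : Fin n, if k ≠ l then β (‖Y k - Y l‖ ^ 2) else 0

/-- The low-dimensional similarity `q_{ij}(Y) = β(|y_i - y_j|²) / Z(Y)`. -/
noncomputable def qfun {E : Type*} [NormedAddCommGroup E] (β : ℝ → ℝ) {n : ℕ}
    (Y : Fin n → E) (i j : Fin n) : ℝ :=
  β (‖Y i - Y j‖ ^ 2) / pairZ β Y

/-- The derivative `(log β)'` on `[0, ∞)`. -/
noncomputable def lbd (β : ℝ → ℝ) : ℝ → ℝ :=
  fun x => derivWithin (fun y => Real.log (β y)) (Set.Ici 0) x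

/-- `Y : ℝ → Fin n → E` is a solution of the gradient flow of the relative entropy:
`dy_i/dt = 4 Σ_{j ≠ i} (p_{ij} - q_{ij}(Y)) (y_i - y_j) (log β)'(|y_i - y_j|²)` for `t ≥ 0`. -/
def IsGradFlow {E : Type*} [NormedAddCommGroup E] [NormedSpace ℝ E] (β : ℝ → ℝ) {n : ℕ}
    (p : Fin n → Fin n → ℝ) (Y : ℝ → Fin n → E) : Prop :=
  ∀ i : Fin n, ∀ t ∈ Set.Ici (0 : ℝ),
    HasDerivWithinAt (fun u => Y u i)
      (∑ j ∈ Finset.univ.filter (· ≠ i),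
        (4 * (p i j - qfun β (Y t) i j) * lbd β (‖Y t i - Y t j‖ ^ 2)) • (Y t i - Y t j))
      (Set.Ici 0) t

/-- The diameter of the configuration `Y`, i.e. `max_{i,j} |y_i - y_j|`. -/
noncomputable def diamY {E : Type*} [NormedAddCommGroup E] {n : ℕ} (Y : Fin n → E) : ℝ :=
  Metric.diam (Set.range Y)

/-!
The cross entropy `-Σ p_{ij} log q_{ij}` decreases along its gradient flow, and all its terms are
nonnegative. Hence each `q_{ij}` stays above some `δ > 0` for all times, which makes the values
`γ(|y_i - y_j|²)` comparable for all pairs of points, with constant `δ⁻¹`. The chord of the convex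
function `γ` over `[0, X]` gives `γ(x) ≤ (x / X) γ(X) + γ(0)`; with `X = diam²` and
`γ(x) ≥ δ γ(X)` large, this forces `x ≥ δ X / 2`, so every distance is at least a fixed fraction
of the diameter once the diameter is large. As the flow preserves the center of mass, the rescaled
configurations stay in a compact set, and the separation of the points passes to any limit.
-/

section PairSums

variable {ι E : Type*} [Fintype ι]

lemma sum_offDiag_univ [DecidableEq ι] {M : Type*} [AddCommMonoid M] (f : ι → ι → M) :
    ∑ e ∈ (Finset.univ : Finset ι).offDiag, f e.1 e.2 =
      ∑ i, ∑ j, if i ≠ j then f i j else 0 := by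
  rw [← Fintype.sum_prod_type' fun i j => if i ≠ j then f i j else 0, ← Finset.sum_filter]
  exact Finset.sum_congr (by ext; simp) fun _ _ => rfl

lemma sum_sum_smul_sub_eq_zero {R : Type*} [Ring R] [AddCommGroup E] [Module R E]
    {w : ι → ι → R} (hw : ∀ i j, w i j = w j i) (y : ι → E) :
    ∑ i, ∑ j, w i j • (y i - y j) = 0 := by
  simp only [smul_sub, Finset.sum_sub_distrib]
  rw [sub_eq_zero, Finset.sum_comm]
  exact Finset.sum_congr rfl fun i _ => Finset.sum_congr rfl fun j _ => by rw [hw]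

lemma sum_sum_mul_inner_sub [NormedAddCommGroup E] [InnerProductSpace ℝ E] {w : ι → ι → ℝ}
    (hw : ∀ i j, w i j = w j i) (y v : ι → E) :
    ∑ i, ∑ j, w i j * inner ℝ (y i - y j) (v i - v j) =
      2 * ∑ i, inner ℝ (∑ j, w i j • (y i - y j)) (v i) := by
  have swap : ∑ i, ∑ j, w i j * inner ℝ (y i - y j) (v j) =
      -∑ i, ∑ j, w i j * inner ℝ (y i - y j) (v i) := by
    rw [Finset.sum_comm]
    simp only [← Finset.sum_neg_distrib]
    refine Finset.sum_congr rfl fun i _ => Finset.sum_congr rfl fun j _ => ?_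
    rw [hw j i, ← neg_sub (y i), inner_neg_left, mul_neg]
  simp only [inner_sub_right, mul_sub, Finset.sum_sub_distrib, swap, sum_inner,
    real_inner_smul_left]
  ring

end PairSums

section Calculus

lemma hasDerivWithinAt_sum_mul_log_div_sum {κ : Type*} {S : Finset κ} {p l : κ → ℝ}
    {b : κ → ℝ → ℝ} {A : Set ℝ} {t : ℝ} (hp : ∑ e ∈ S, p e = 1) (hpos : ∀ e ∈ S, 0 < b e t)
    (hb : ∀ e ∈ S, HasDerivWithinAt (b e) (b e t * l e) A t) :
    HasDerivWithinAt (fun u => ∑ e ∈ S, p e * Real.log (b e u / ∑ f ∈ S, b f u))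
      (∑ e ∈ S, (p e - b e t / ∑ f ∈ S, b f t) * l e) A t := by
  have hS : S.Nonempty := Finset.nonempty_of_sum_ne_zero (hp.trans_ne one_ne_zero)
  have hZ : 0 < ∑ f ∈ S, b f t := Finset.sum_pos hpos hS
  have hterm : ∀ e ∈ S, HasDerivWithinAt (fun u => p e * Real.log (b e u / ∑ f ∈ S, b f u))
      (p e * (l e - (∑ f ∈ S, b f t * l f) / ∑ f ∈ S, b f t)) A t := by
    intro e he
    have hlog := ((hb e he).div (HasDerivWithinAt.fun_sum hb) hZ.ne').log
      (div_pos (hpos e he) hZ).ne'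
    refine (hlog.const_mul (p e)).congr_deriv ?_
    have := (hpos e he).ne'
    simp only [Pi.div_apply]
    field_simp
  refine (HasDerivWithinAt.fun_sum hterm).congr_deriv ?_
  simp only [mul_sub, sub_mul, Finset.sum_sub_distrib, ← Finset.sum_mul, hp, one_mul,
    Finset.sum_div, div_mul_eq_mul_div]

variable {E : Type*} {β : ℝ → ℝ}

lemma hasDerivWithinAt_mul_lbd {x : ℝ} (hx : 0 ≤ x) (hβx : 0 < β x)
    (hβ : DifferentiableWithinAt ℝ β (Set.Ici 0) x) :
    HasDerivWithinAt β (β x * lbd β x) (Set.Ici 0) x := by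
  have hlbd : lbd β x = derivWithin β (Set.Ici 0) x / β x :=
    (hβ.hasDerivWithinAt.log hβx.ne').derivWithin (uniqueDiffOn_Ici 0 x hx)
  rw [hlbd, mul_div_cancel₀ _ hβx.ne']
  exact hβ.hasDerivWithinAt

lemma hasDerivWithinAt_comp_norm_sq [NormedAddCommGroup E] [InnerProductSpace ℝ E]
    {y : ℝ → E} {v : E} {A : Set ℝ} {t : ℝ} (hβpos : 0 < β (‖y t‖ ^ 2))
    (hβ : DifferentiableWithinAt ℝ β (Set.Ici 0) (‖y t‖ ^ 2)) (hy : HasDerivWithinAt y v A t) :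
    HasDerivWithinAt (fun u => β (‖y u‖ ^ 2))
      (β (‖y t‖ ^ 2) * (lbd β (‖y t‖ ^ 2) * (2 * inner ℝ (y t) v))) A t := by
  rw [← mul_assoc]
  exact (hasDerivWithinAt_mul_lbd (sq_nonneg _) hβpos hβ).comp t hy.norm_sq
    fun u _ => sq_nonneg ‖y u‖

lemma mul_le_two_mul_of_convexOn {g : ℝ → ℝ} (hg : ConvexOn ℝ (Set.Ici 0) g) (hg0 : 0 ≤ g 0)
    {x X δ : ℝ} (hx : 0 ≤ x) (hX : 0 < X) (hxX : x ≤ X) (hgX : 0 < g X)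
    (hbig : 2 * g 0 ≤ δ * g X) (hδ : δ * g X ≤ g x) : δ * X ≤ 2 * x := by
  have hr : x / X ≤ 1 := (div_le_one hX).2 hxX
  have hchord : g x ≤ x / X * g X + (1 - x / X) * g 0 := by
    simpa [hX.ne'] using hg.2 hX.le (Set.mem_Ici.2 le_rfl) (by positivity) (sub_nonneg.2 hr)
      (add_sub_cancel _ _)
  have hmul : δ * g X ≤ 2 * (x / X) * g X := by
    nlinarith [mul_nonneg (div_nonneg hx hX.le) hg0]
  calc δ * X ≤ 2 * (x / X) * X := by gcongr; exact le_of_mul_le_mul_right hmul hgX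
    _ = 2 * x := by field_simp

end Calculus

section Metric

lemma exists_dist_eq_diam_range {ι X : Type*} [Finite ι] [Nonempty ι] [PseudoMetricSpace X]
    (y : ι → X) : ∃ i j, dist (y i) (y j) = Metric.diam (Set.range y) := by
  obtain ⟨⟨i, j⟩, hmax⟩ := Finite.exists_max fun e : ι × ι => dist (y e.1) (y e.2)
  refine ⟨i, j, le_antisymm (Metric.dist_le_diam_of_mem (Set.finite_range y).isBounded
    ⟨i, rfl⟩ ⟨j, rfl⟩) (Metric.diam_le_of_forall_dist_le dist_nonneg ?_)⟩
  rintro _ ⟨k, rfl⟩ _ ⟨l, rfl⟩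
  exact hmax (k, l)

lemma norm_sub_mean_le_diam_range {ι E : Type*} [Fintype ι] [SeminormedAddCommGroup E]
    [NormedSpace ℝ E] (y : ι → E) (i : ι) :
    ‖y i - (Fintype.card ι : ℝ)⁻¹ • ∑ j, y j‖ ≤ Metric.diam (Set.range y) := by
  have hmean : (Fintype.card ι : ℝ)⁻¹ • ∑ j, y j ∈ convexHull ℝ (Set.range y) := by
    have : 0 < Fintype.card ι := Fintype.card_pos_iff.2 ⟨i⟩
    simpa [Finset.centerMass] using Finset.univ.centerMass_mem_convexHull
      (w := fun _ => (1 : ℝ)) (z := y) (by simp) (by simpa) fun j _ => Set.mem_range_self j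
  rw [← dist_eq_norm, ← convexHull_diam]
  exact Metric.dist_le_diam_of_mem
    (isBounded_convexHull.2 (Set.finite_range y).isBounded)
    (subset_convexHull ℝ _ (Set.mem_range_self i)) hmean

lemma exists_subseq_tendsto_injective {ι X : Type*} [Finite ι] [PseudoMetricSpace X]
    [ProperSpace X] {z : ℕ → ι → X} {B : Set (ι → X)} (hB : Bornology.IsBounded B)
    (hz : ∀ᶠ k in atTop, z k ∈ B) {c : ℝ} (hc : 0 < c)
    (hsep : ∀ᶠ k in atTop, ∀ i j, i ≠ j → c ≤ dist (z k i) (z k j)) :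
    ∃ (φ : ℕ → ℕ) (z' : ι → X), StrictMono φ ∧ Function.Injective z' ∧
      Tendsto (z ∘ φ) atTop (𝓝 z') := by
  cases nonempty_fintype ι
  obtain ⟨z', -, φ, hφ, hlim⟩ := tendsto_subseq_of_frequently_bounded hB hz.frequently
  refine ⟨φ, z', hφ, fun i j hij => by_contra fun hne => ?_, hlim⟩
  have hdist : Tendsto (fun k => dist (z (φ k) i) (z (φ k) j)) atTop (𝓝 (dist (z' i) (z' j))) :=
    (tendsto_pi_nhds.1 hlim i).dist (tendsto_pi_nhds.1 hlim j)
  have hle : c ≤ dist (z' i) (z' j) := ge_of_tendsto hdist <|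
    (hφ.tendsto_atTop.eventually hsep).mono fun k hk => hk i j hne
  exact hc.not_ge (hle.trans_eq (by rw [hij, dist_self]))

end Metric

section Configuration

variable {E : Type*} [NormedAddCommGroup E] {n : ℕ} {β : ℝ → ℝ}

lemma pairZ_eq_sum_offDiag (β : ℝ → ℝ) (y : Fin n → E) :
    pairZ β y = ∑ e ∈ (Finset.univ : Finset (Fin n)).offDiag, β (‖y e.1 - y e.2‖ ^ 2) :=
  (sum_offDiag_univ fun i j => β (‖y i - y j‖ ^ 2)).symm

lemma le_pairZ (hβpos : ∀ x, 0 ≤ x → 0 < β x) (y : Fin n → E) {i j : Fin n} (hij : i ≠ j) :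
    β (‖y i - y j‖ ^ 2) ≤ pairZ β y := by
  rw [pairZ_eq_sum_offDiag]
  exact Finset.single_le_sum (f := fun e : Fin n × Fin n => β (‖y e.1 - y e.2‖ ^ 2))
    (fun e _ => (hβpos _ (sq_nonneg _)).le) (a := (i, j)) (by simpa using hij)

lemma pairZ_pos (hβpos : ∀ x, 0 ≤ x → 0 < β x) (y : Fin n → E) {i j : Fin n} (hij : i ≠ j) :
    0 < pairZ β y :=
  (hβpos _ (sq_nonneg _)).trans_le (le_pairZ hβpos y hij)

lemma qfun_pos (hβpos : ∀ x, 0 ≤ x → 0 < β x) (y : Fin n → E) {i j : Fin n} (hij : i ≠ j) :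
    0 < qfun β y i j :=
  div_pos (hβpos _ (sq_nonneg _)) (pairZ_pos hβpos y hij)

lemma qfun_le_one (hβpos : ∀ x, 0 ≤ x → 0 < β x) (y : Fin n → E) {i j : Fin n} (hij : i ≠ j) :
    qfun β y i j ≤ 1 :=
  (div_le_one (pairZ_pos hβpos y hij)).2 (le_pairZ hβpos y hij)

lemma mul_inv_le_inv_of_le_qfun (hβpos : ∀ x, 0 ≤ x → 0 < β x) {y : Fin n → E} {δ : ℝ}
    {i j k l : Fin n} (hij : i ≠ j) (hδ : δ ≤ qfun β y k l) :
    δ * (β (‖y k - y l‖ ^ 2))⁻¹ ≤ (β (‖y i - y j‖ ^ 2))⁻¹ := by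
  have hkl : 0 < β (‖y k - y l‖ ^ 2) := hβpos _ (sq_nonneg _)
  calc δ * (β (‖y k - y l‖ ^ 2))⁻¹
      ≤ qfun β y k l * (β (‖y k - y l‖ ^ 2))⁻¹ := by gcongr
    _ = (pairZ β y)⁻¹ := by rw [qfun]; field_simp
    _ ≤ (β (‖y i - y j‖ ^ 2))⁻¹ :=
        inv_anti₀ (hβpos _ (sq_nonneg _)) (le_pairZ hβpos y hij)

lemma mul_diamY_sq_le (hβpos : ∀ x, 0 ≤ x → 0 < β x)
    (hγconv : ConvexOn ℝ (Set.Ici 0) fun x => (β x)⁻¹) {y : Fin n → E} {δ : ℝ}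
    (hδ : ∀ i j, i ≠ j → δ ≤ qfun β y i j) (hdiam : 0 < diamY y)
    (hbig : 2 * (β 0)⁻¹ ≤ δ * (β (diamY y ^ 2))⁻¹) {i j : Fin n} (hij : i ≠ j) :
    δ * diamY y ^ 2 ≤ 2 * ‖y i - y j‖ ^ 2 := by
  have : Nonempty (Fin n) := ⟨i⟩
  obtain ⟨k, l, hkl⟩ := exists_dist_eq_diam_range y
  have hne : k ≠ l := by
    rintro rfl
    exact hdiam.ne ((dist_self _).symm.trans hkl)
  have hle : ‖y i - y j‖ ≤ diamY y := by
    rw [← dist_eq_norm]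
    exact Metric.dist_le_diam_of_mem (Set.finite_range y).isBounded ⟨i, rfl⟩ ⟨j, rfl⟩
  have hratio : δ * (β (diamY y ^ 2))⁻¹ ≤ (β (‖y i - y j‖ ^ 2))⁻¹ := by
    rw [diamY, ← hkl, dist_eq_norm]
    exact mul_inv_le_inv_of_le_qfun hβpos hij (hδ k l hne)
  exact mul_le_two_mul_of_convexOn hγconv (inv_pos.2 (hβpos 0 le_rfl)).le (sq_nonneg _)
    (by positivity) (by gcongr) (inv_pos.2 (hβpos _ (sq_nonneg _))) hbig hratio

lemma norm_inv_diamY_smul_le [NormedSpace ℝ E] {y : Fin n → E} (hy : 1 ≤ diamY y) :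
    ‖(diamY y)⁻¹ • y‖ ≤ 1 + ‖(n : ℝ)⁻¹ • ∑ j, y j‖ := by
  have hpos : 0 < diamY y := one_pos.trans_le hy
  rw [pi_norm_le_iff_of_nonneg (by positivity)]
  intro i
  have hcenter : ‖y i - (n : ℝ)⁻¹ • ∑ j, y j‖ ≤ diamY y := by
    simpa only [diamY, Fintype.card_fin] using norm_sub_mean_le_diam_range y i
  have hmean : ‖(n : ℝ)⁻¹ • ∑ j, y j‖ ≤ diamY y * ‖(n : ℝ)⁻¹ • ∑ j, y j‖ :=
    le_mul_of_one_le_left (norm_nonneg _) hy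
  rw [Pi.smul_apply, norm_smul, norm_inv, Real.norm_of_nonneg hpos.le, inv_mul_le_iff₀ hpos]
  linarith [norm_le_norm_sub_add (y i) ((n : ℝ)⁻¹ • ∑ j, y j)]

/-- The cross entropy `-Σ_{i ≠ j} p_{ij} log q_{ij}(y)`. It differs from the relative entropy of
`p` with respect to `q(y)` by the constant `Σ_{i ≠ j} p_{ij} log p_{ij}`, so the two have the same
gradient flow. -/
noncomputable def crossEntropy (β : ℝ → ℝ) (p : Fin n → Fin n → ℝ) (y : Fin n → E) : ℝ :=
  -∑ e ∈ (Finset.univ : Finset (Fin n)).offDiag, p e.1 e.2 * Real.log (qfun β y e.1 e.2)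

lemma exp_neg_crossEntropy_div_le_qfun {p : Fin n → Fin n → ℝ}
    (hppos : ∀ i j, i ≠ j → 0 < p i j) (hβpos : ∀ x, 0 ≤ x → 0 < β x) (y : Fin n → E)
    {i j : Fin n} (hij : i ≠ j) : Real.exp (-(crossEntropy β p y / p i j)) ≤ qfun β y i j := by
  have hnonneg : ∀ e ∈ (Finset.univ : Finset (Fin n)).offDiag,
      0 ≤ -(p e.1 e.2 * Real.log (qfun β y e.1 e.2)) := by
    intro e he
    have hne : e.1 ≠ e.2 := (Finset.mem_offDiag.1 he).2.2
    exact neg_nonneg.2 <| mul_nonpos_of_nonneg_of_nonpos (hppos _ _ hne).le <|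
      Real.log_nonpos (qfun_pos hβpos y hne).le (qfun_le_one hβpos y hne)
  have hterm : -(p i j * Real.log (qfun β y i j)) ≤ crossEntropy β p y := by
    rw [crossEntropy, ← Finset.sum_neg_distrib]
    exact Finset.single_le_sum hnonneg (a := (i, j)) (by simpa using hij)
  rw [← Real.le_log_iff_exp_le (qfun_pos hβpos y hij), neg_le, le_div_iff₀ (hppos i j hij)]
  linarith

lemma exists_pos_le_qfun {p : Fin n → Fin n → ℝ} (hppos : ∀ i j, i ≠ j → 0 < p i j)
    (hβpos : ∀ x, 0 ≤ x → 0 < β x) (C : ℝ) :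
    ∃ δ > 0, ∀ y : Fin n → E, crossEntropy β p y ≤ C → ∀ i j, i ≠ j → δ ≤ qfun β y i j := by
  have hsmall : ∀ᶠ δ in 𝓝[>] (0 : ℝ), ∀ i j, δ ≤ Real.exp (-(C / p i j)) :=
    eventually_all.2 fun i => eventually_all.2 fun j =>
      mem_of_superset (Ioc_mem_nhdsGT (Real.exp_pos _)) fun _ h => h.2
  obtain ⟨δ, hδ, hδpos⟩ := (hsmall.and self_mem_nhdsWithin).exists
  refine ⟨δ, hδpos, fun y hy i j hij => ?_⟩
  calc δ ≤ Real.exp (-(C / p i j)) := hδ i j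
    _ ≤ Real.exp (-(crossEntropy β p y / p i j)) := by
        have := hppos i j hij
        gcongr
    _ ≤ qfun β y i j := exp_neg_crossEntropy_div_le_qfun hppos hβpos y hij

end Configuration

section Flow

variable {E : Type*} [NormedAddCommGroup E] {n : ℕ} {β : ℝ → ℝ} {p : Fin n → Fin n → ℝ}

/-- The scalar factor of `y_i - y_j` in the equation for `dy_i/dt`. -/
noncomputable def coupling (β : ℝ → ℝ) (p : Fin n → Fin n → ℝ) (y : Fin n → E)
    (i j : Fin n) : ℝ :=
  4 * (p i j - qfun β y i j) * lbd β (‖y i - y j‖ ^ 2)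

/-- The right-hand side of the equation for `dy_i/dt`. The index `j = i`, excluded in
`IsGradFlow`, is kept here: its term vanishes. -/
noncomputable def velocity [NormedSpace ℝ E] (β : ℝ → ℝ) (p : Fin n → Fin n → ℝ)
    (y : Fin n → E) (i : Fin n) : E :=
  ∑ j, coupling β p y i j • (y i - y j)

lemma coupling_comm (hsymm : ∀ i j, p i j = p j i) (y : Fin n → E) (i j : Fin n) :
    coupling β p y i j = coupling β p y j i := by
  rw [coupling, coupling, qfun, qfun, hsymm i j, norm_sub_rev (y i)]

lemma sum_velocity [NormedSpace ℝ E] (hsymm : ∀ i j, p i j = p j i) (y : Fin n → E) :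
    ∑ i, velocity β p y i = 0 :=
  sum_sum_smul_sub_eq_zero (coupling_comm hsymm y) y

lemma sum_offDiag_sub_qfun_mul_eq_sum_norm_sq_velocity [InnerProductSpace ℝ E]
    (hsymm : ∀ i j, p i j = p j i) (y : Fin n → E) :
    ∑ e ∈ (Finset.univ : Finset (Fin n)).offDiag, (p e.1 e.2 - qfun β y e.1 e.2) *
      (lbd β (‖y e.1 - y e.2‖ ^ 2) *
        (2 * inner ℝ (y e.1 - y e.2) (velocity β p y e.1 - velocity β p y e.2))) =
      ∑ i, ‖velocity β p y i‖ ^ 2 := by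
  set v := velocity β p y
  calc _ = ∑ i, ∑ j, if i ≠ j then (p i j - qfun β y i j) *
          (lbd β (‖y i - y j‖ ^ 2) * (2 * inner ℝ (y i - y j) (v i - v j))) else 0 :=
        sum_offDiag_univ fun i j => (p i j - qfun β y i j) *
          (lbd β (‖y i - y j‖ ^ 2) * (2 * inner ℝ (y i - y j) (v i - v j)))
    _ = 2⁻¹ * ∑ i, ∑ j, coupling β p y i j * inner ℝ (y i - y j) (v i - v j) := by
        simp only [Finset.mul_sum]
        refine Finset.sum_congr rfl fun i _ => Finset.sum_congr rfl fun j _ => ?_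
        obtain rfl | hij := eq_or_ne i j
        · simp
        · rw [if_pos hij, coupling]
          ring
    _ = ∑ i, inner ℝ (v i) (v i) := by
        rw [sum_sum_mul_inner_sub (coupling_comm hsymm y), inv_mul_cancel_left₀ two_ne_zero]
        rfl
    _ = ∑ i, ‖v i‖ ^ 2 := by simp only [real_inner_self_eq_norm_sq]

namespace IsGradFlow

variable {Y : ℝ → Fin n → E} {t : ℝ}

lemma hasDerivWithinAt [NormedSpace ℝ E] (h : IsGradFlow β p Y) (ht : 0 ≤ t) (i : Fin n) :
    HasDerivWithinAt (fun u => Y u i) (velocity β p (Y t) i) (Set.Ici 0) t := by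
  refine (h i t ht).congr_deriv (Finset.sum_filter_of_ne fun j _ hj => ?_)
  rintro rfl
  simp at hj

lemma sum_eq [NormedSpace ℝ E] (h : IsGradFlow β p Y) (hsymm : ∀ i j, p i j = p j i)
    (ht : 0 ≤ t) : ∑ i, Y t i = ∑ i, Y 0 i := by
  have hderiv : ∀ u ∈ Set.Ici (0 : ℝ),
      HasDerivWithinAt (fun u => ∑ i, Y u i) 0 (Set.Ici 0) u := fun u hu =>
    (HasDerivWithinAt.fun_sum fun i _ => h.hasDerivWithinAt hu i).congr_deriv
      (sum_velocity hsymm (Y u))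
  simpa [sub_eq_zero] using (convex_Ici (0 : ℝ)).norm_image_sub_le_of_norm_hasDerivWithin_le
    (C := 0) hderiv (by simp) (Set.mem_Ici.2 le_rfl) ht

variable [InnerProductSpace ℝ E]

lemma hasDerivWithinAt_crossEntropy (h : IsGradFlow β p Y) (hsymm : ∀ i j, p i j = p j i)
    (hpsum : (∑ i, ∑ j, if i ≠ j then p i j else (0 : ℝ)) = 1)
    (hβpos : ∀ x, 0 ≤ x → 0 < β x) (hβ : DifferentiableOn ℝ β (Set.Ici 0)) (ht : 0 ≤ t) :
    HasDerivWithinAt (fun u => crossEntropy β p (Y u))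
      (-∑ i, ‖velocity β p (Y t) i‖ ^ 2) (Set.Ici 0) t := by
  have hlog := hasDerivWithinAt_sum_mul_log_div_sum
    (p := fun e : Fin n × Fin n => p e.1 e.2)
    (b := fun e u => β (‖Y u e.1 - Y u e.2‖ ^ 2))
    ((sum_offDiag_univ p).trans hpsum) (fun e _ => hβpos _ (sq_nonneg _))
    (fun e _ => hasDerivWithinAt_comp_norm_sq (hβpos _ (sq_nonneg _))
      (hβ _ (Set.mem_Ici.2 (sq_nonneg _)))
      ((h.hasDerivWithinAt ht e.1).sub (h.hasDerivWithinAt ht e.2)))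
  simp only [← pairZ_eq_sum_offDiag] at hlog
  rw [← sum_offDiag_sub_qfun_mul_eq_sum_norm_sq_velocity hsymm]
  exact hlog.neg

lemma antitoneOn_crossEntropy (h : IsGradFlow β p Y) (hsymm : ∀ i j, p i j = p j i)
    (hpsum : (∑ i, ∑ j, if i ≠ j then p i j else (0 : ℝ)) = 1)
    (hβpos : ∀ x, 0 ≤ x → 0 < β x) (hβ : DifferentiableOn ℝ β (Set.Ici 0)) :
    AntitoneOn (fun t => crossEntropy β p (Y t)) (Set.Ici 0) := by
  have hderiv := fun t (ht : t ∈ Set.Ici (0 : ℝ)) =>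
    h.hasDerivWithinAt_crossEntropy hsymm hpsum hβpos hβ ht
  exact antitoneOn_of_hasDerivWithinAt_nonpos (convex_Ici 0)
    (fun t ht => (hderiv t ht).continuousWithinAt)
    (fun t ht => (hderiv t (interior_subset ht)).mono interior_subset)
    fun t _ => neg_nonpos.2 (Finset.sum_nonneg fun i _ => sq_nonneg _)

lemma exists_mul_diamY_le (h : IsGradFlow β p Y) (hsymm : ∀ i j, p i j = p j i)
    (hppos : ∀ i j, i ≠ j → 0 < p i j)
    (hpsum : (∑ i, ∑ j, if i ≠ j then p i j else (0 : ℝ)) = 1)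
    (hβpos : ∀ x, 0 ≤ x → 0 < β x) (hβ : DifferentiableOn ℝ β (Set.Ici 0))
    (hγconv : ConvexOn ℝ (Set.Ici 0) fun x => (β x)⁻¹)
    (hγtop : Tendsto (fun x => (β x)⁻¹) atTop atTop) :
    ∃ c > 0, ∃ D, ∀ t, 0 ≤ t → D ≤ diamY (Y t) →
      ∀ i j, i ≠ j → c * diamY (Y t) ≤ dist (Y t i) (Y t j) := by
  obtain ⟨δ, hδpos, hδ⟩ := exists_pos_le_qfun (E := E) hppos hβpos (crossEntropy β p (Y 0))
  have hbig : ∀ᶠ D in atTop, 2 * (β 0)⁻¹ ≤ δ * (β (D ^ 2))⁻¹ :=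
    ((hγtop.comp (tendsto_pow_atTop two_ne_zero)).const_mul_atTop hδpos).eventually_ge_atTop _
  obtain ⟨D, hD⟩ := eventually_atTop.1 (hbig.and (eventually_gt_atTop 0))
  refine ⟨√(δ / 2), by positivity, D, fun t ht hdiam i j hij => ?_⟩
  have hentropy : crossEntropy β p (Y t) ≤ crossEntropy β p (Y 0) :=
    h.antitoneOn_crossEntropy hsymm hpsum hβpos hβ Set.self_mem_Ici ht ht
  have hsq : δ * diamY (Y t) ^ 2 ≤ 2 * ‖Y t i - Y t j‖ ^ 2 :=
    mul_diamY_sq_le hβpos hγconv (hδ _ hentropy) (hD _ hdiam).2 (hD _ hdiam).1 hij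
  rw [dist_eq_norm]
  refine le_of_sq_le_sq ?_ (norm_nonneg _)
  rw [mul_pow, Real.sq_sqrt (by positivity)]
  linarith

end IsGradFlow

end Flow

theorem rescaled_subconvergence_general {E : Type*} [NormedAddCommGroup E]
    [InnerProductSpace ℝ E] [FiniteDimensional ℝ E] {n : ℕ} {p : Fin n → Fin n → ℝ}
    (hsymm : ∀ i j, p i j = p j i) (hppos : ∀ i j, i ≠ j → 0 < p i j)
    (hpsum : (∑ i, ∑ j, if i ≠ j then p i j else (0 : ℝ)) = 1) {β : ℝ → ℝ}
    (hβpos : ∀ x, 0 ≤ x → 0 < β x) (hβ : DifferentiableOn ℝ β (Set.Ici 0))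
    (hγconv : ConvexOn ℝ (Set.Ici 0) fun x => (β x)⁻¹)
    (hγtop : Tendsto (fun x => (β x)⁻¹) atTop atTop) {Y : ℝ → Fin n → E}
    (hflow : IsGradFlow β p Y) {tseq : ℕ → ℝ} (htnn : ∀ k, 0 ≤ tseq k)
    (hdiam : Tendsto (fun k => diamY (Y (tseq k))) atTop atTop) :
    ∃ (φ : ℕ → ℕ) (ylim : Fin n → E), StrictMono φ ∧ (∀ i j : Fin n, i ≠ j → ylim i ≠ ylim j) ∧
      ∀ i : Fin n,
        Tendsto (fun k => (diamY (Y (tseq (φ k))))⁻¹ • Y (tseq (φ k)) i) atTop (𝓝 (ylim i)) := by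
  set z : ℕ → Fin n → E := fun k => (diamY (Y (tseq k)))⁻¹ • Y (tseq k)
  have hdiam_ge : ∀ᶠ k in atTop, 1 ≤ diamY (Y (tseq k)) := hdiam.eventually_ge_atTop 1
  have hbdd : ∀ᶠ k in atTop, z k ∈ Metric.closedBall 0 (1 + ‖(n : ℝ)⁻¹ • ∑ i, Y 0 i‖) := by
    filter_upwards [hdiam_ge] with k hk
    rw [mem_closedBall_zero_iff, ← hflow.sum_eq hsymm (htnn k)]
    exact norm_inv_diamY_smul_le hk
  obtain ⟨c, hc, D, hdist⟩ :=
    hflow.exists_mul_diamY_le hsymm hppos hpsum hβpos hβ hγconv hγtop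
  have hsep : ∀ᶠ k in atTop, ∀ i j, i ≠ j → c ≤ dist (z k i) (z k j) := by
    filter_upwards [hdiam.eventually_ge_atTop D, hdiam_ge] with k hkD hk i j hij
    have hpos : 0 < diamY (Y (tseq k)) := one_pos.trans_le hk
    simp only [z, Pi.smul_apply]
    rw [dist_smul₀, norm_inv, Real.norm_of_nonneg hpos.le,
      ← div_eq_inv_mul, le_div_iff₀ hpos]
    exact hdist _ (htnn k) hkD i j hij
  obtain ⟨φ, ylim, hφ, hinj, hlim⟩ :=
    exists_subseq_tendsto_injective Metric.isBounded_closedBall hbdd hc hsep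
  exact ⟨φ, ylim, hφ, fun _ _ hij => hinj.ne hij, tendsto_pi_nhds.1 hlim⟩

/-- **Theorem 1.4.** Under assumptions (A1) and (A2) on `γ = 1/β`, if `Y(t)` is a solution of
the gradient flow of the relative entropy and `diam Y(t_i) → ∞` along a sequence of times
`t_i → ∞`, then the rescaled configurations `Y(t_i)/diam Y(t_i)` subconverge to `n`
pairwise distinct points in `ℝ^s`. -/
theorem rescaled_subconvergence
    (s n : ℕ) (hs : 1 ≤ s) (hn : s + 1 < n)
    (p : Fin n → Fin n → ℝ)
    (hsymm : ∀ i j, p i j = p j i)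
    (hppos : ∀ i j, i ≠ j → 0 < p i j)
    (hpsum : (∑ i, ∑ j, if i ≠ j then p i j else (0 : ℝ)) = 1)
    (β : ℝ → ℝ)
    (hβpos : ∀ x, 0 ≤ x → 0 < β x)
    (hβsmooth : ContDiffOn ℝ (⊤ : ℕ∞) β (Set.Ici 0))
    (hβanti : AntitoneOn β (Set.Ici 0))
    (hβbdd : ∃ M : ℝ, ∀ x, 0 ≤ x → |lbd β x| ≤ M)
    -- (A1): `γ = 1/β` is convex on `[0,∞)`, `γ(0) = 1`, `γ' ≥ 0`, and `γ(x) → ∞`.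
    (hγconv : ConvexOn ℝ (Set.Ici 0) fun x => (β x)⁻¹)
    (hγ0 : (β 0)⁻¹ = 1)
    (hγder : ∀ x, 0 ≤ x → 0 ≤ derivWithin (fun y => (β y)⁻¹) (Set.Ici 0) x)
    (hγtop : Tendsto (fun x => (β x)⁻¹) atTop atTop)
    -- (A2): `sup_{x ≥ 0} (log γ)'(x) < ∞`.
    (hA2 : ∃ M : ℝ, ∀ x, 0 ≤ x →
      derivWithin (fun y => Real.log ((β y)⁻¹)) (Set.Ici 0) x ≤ M)
    (Y : ℝ → Fin n → EuclideanSpace ℝ (Fin s))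
    (hflow : IsGradFlow β p Y)
    (tseq : ℕ → ℝ) (htnn : ∀ k, 0 ≤ tseq k)
    (htseq : Tendsto tseq atTop atTop)
    (hdiam : Tendsto (fun k => diamY (Y (tseq k))) atTop atTop) :
    ∃ (φ : ℕ → ℕ) (ylim : Fin n → EuclideanSpace ℝ (Fin s)),
      StrictMono φ ∧ (∀ i j : Fin n, i ≠ j → ylim i ≠ ylim j) ∧
      ∀ i : Fin n,
        Tendsto (fun k => (diamY (Y (tseq (φ k))))⁻¹ • Y (tseq (φ k)) i)
          atTop (𝓝 (ylim i)) :=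
  rescaled_subconvergence_general hsymm hppos hpsum hβpos (hβsmooth.differentiableOn (by simp))
    hγconv hγtop hflow htnn hdiam
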